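/- arXiv:0904.2194 — 3 statements merged into one kernel-verified Lean document; each statement's English description precedes it below -/
import Mathlib

section
/- Let G_0 be an acyclic graph on [n+1] with d edges, let (i,j), (j,k) ∈ E(G_0) with i < j < k, and let G_1, G_2, G_3 be the graphs produced by the reduction of G_0 at this pair. Then G_1, G_2, G_3 are acyclic; C(G_0) = C(G_1) ∪ C(G_2), and the linear spans of C(G_0), C(G_1), C(G_2) each have dimension d; and C(G_3) = C(G_1) ∩ C(G_2), and the linear span of C(G_3) has dimension d − 1. -/
open scoped BigOperators

namespace RPaper

abbrev Vtype (n : ℕ) := Fin (n+1) → ℝ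

abbrev Edge (n : ℕ) := Fin (n+1) × Fin (n+1)

abbrev EdgeSet (n : ℕ) := Finset (Edge n)

/-- The vector `e_i - e_j`. -/
def ev {n : ℕ} (i j : Fin (n+1)) : Vtype n := Pi.single i 1 - Pi.single j 1

/-- Edges are stored as pairs `(i,j)` with `i < j`. -/
def IsGraph {n : ℕ} (E : EdgeSet n) : Prop := ∀ e ∈ E, e.1 < e.2

/-- The simple graph underlying an edge set. -/
def toSG {n : ℕ} (E : EdgeSet n) : SimpleGraph (Fin (n+1)) :=
  SimpleGraph.fromRel (fun a b => (a, b) ∈ E)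

def Acyclic {n : ℕ} (E : EdgeSet n) : Prop := (toSG E).IsAcyclic

def IsForest {n : ℕ} (E : EdgeSet n) : Prop := IsGraph E ∧ Acyclic E

/-- A tree on the full vertex set `[n+1]`: connected and acyclic. -/
def IsTreeG {n : ℕ} (E : EdgeSet n) : Prop := IsGraph E ∧ (toSG E).IsTree

def Noncrossing {n : ℕ} (E : EdgeSet n) : Prop :=
  ¬ ∃ i j k l : Fin (n+1), i < j ∧ j < k ∧ k < l ∧ (i, k) ∈ E ∧ (j, l) ∈ E

def Alternating {n : ℕ} (E : EdgeSet n) : Prop :=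
  ¬ ∃ i j k : Fin (n+1), i < j ∧ j < k ∧ (i, j) ∈ E ∧ (j, k) ∈ E

/-- The positive roots `e_i - e_j`, `i < j`. -/
def PhiPlus (n : ℕ) : Set (Vtype n) := {v | ∃ i j : Fin (n+1), i < j ∧ v = ev i j}

/-- The cone of nonnegative combinations of the vectors of `E`. -/
def cone {n : ℕ} (E : EdgeSet n) : Set (Vtype n) :=
  {x | ∃ c : Edge n → ℝ, (∀ e, 0 ≤ c e) ∧ x = ∑ e ∈ E, c e • ev e.1 e.2}

def Vbar {n : ℕ} (E : EdgeSet n) : Set (Vtype n) := PhiPlus n ∩ cone E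

/-- The root polytope of a graph. -/
def RootPoly {n : ℕ} (E : EdgeSet n) : Set (Vtype n) := convexHull ℝ ({0} ∪ Vbar E)

/-- The full root polytope `P(A_n^+)`. -/
def FullRootPoly (n : ℕ) : Set (Vtype n) := convexHull ℝ ({0} ∪ PhiPlus n)

/-- Transitive closure: `(i,j)`, `i<j`, whenever there is an increasing path in `E`. -/
def closureT {n : ℕ} (E : EdgeSet n) : Set (Edge n) :=
  {p | p.1 < p.2 ∧ Relation.TransGen (fun a b => a < b ∧ (a, b) ∈ E) p.1 p.2}

/-- Noncrossing alternating spanning trees of the transitive closure of `E`. -/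
def NCASpanningTrees {n : ℕ} (E : EdgeSet n) : Set (EdgeSet n) :=
  {F | IsTreeG F ∧ Noncrossing F ∧ Alternating F ∧ ↑F ⊆ closureT E}

/-- The `t`-th dilate of a set. -/
def dilate {n : ℕ} (t : ℕ) (P : Set (Vtype n)) : Set (Vtype n) := (fun x => (t : ℝ) • x) '' P

/-- Number of lattice points of the `t`-th dilate. -/
noncomputable def latticeCount {n : ℕ} (P : Set (Vtype n)) (t : ℕ) : ℕ :=
  Set.ncard {x ∈ dilate t P | ∀ i, ∃ z : ℤ, x i = (z : ℝ)}

/-- Dimension of the affine span of a set. -/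
noncomputable def polyDim {n : ℕ} (P : Set (Vtype n)) : ℕ :=
  Module.finrank ℝ (affineSpan ℝ P).direction

/-- The points `0` and `e_i - e_j`, `(i,j) ∈ F`. -/
def vertSet {n : ℕ} (F : EdgeSet n) : Set (Vtype n) :=
  {0} ∪ {v | ∃ e ∈ F, v = ev e.1 e.2}

/-- A playable route: an increasing vertex sequence whose consecutive pairs are edges. -/
structure PlayableRoute {n : ℕ} (E : EdgeSet n) where
  len : ℕ
  route : Fin (len + 2) → Fin (n+1)
  mono : StrictMono route
  mem : ∀ t : Fin (len + 1), (route t.castSucc, route t.succ) ∈ E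

/-- A set is a simplex if it is the convex hull of a finite affinely independent set. -/
def IsSimplex {n : ℕ} (P : Set (Vtype n)) : Prop :=
  ∃ s : Finset (Vtype n),
    AffineIndependent ℝ (fun x : (s : Set (Vtype n)) => x.1) ∧ P = convexHull ℝ ↑s

/-- The three graphs produced by a reduction at `(i,j), (j,k)`. -/
def red1 {n : ℕ} (E : EdgeSet n) (i j k : Fin (n+1)) : EdgeSet n :=
  insert (i, k) (E.erase (j, k))

def red2 {n : ℕ} (E : EdgeSet n) (i j k : Fin (n+1)) : EdgeSet n :=
  insert (i, k) (E.erase (i, j))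

def red3 {n : ℕ} (E : EdgeSet n) (i j k : Fin (n+1)) : EdgeSet n :=
  insert (i, k) ((E.erase (i, j)).erase (j, k))

/-!
Write `v_e` for the vector of an edge `e`. A vector `e_u - e_w` lies in the span of the `v_e`,
`e ∈ E`, exactly when `u` and `w` are connected in `E`; hence an oriented graph is acyclic iff its
vectors are linearly independent, and everything reduces to a statement about a linearly independent
family in which `v_a` or `v_b` (or both) is exchanged for `v_c = v_a + v_b`. For the cones,
`s v_a + t v_b` equals `t v_c + (s - t) v_a` or `s v_c + (t - s) v_b`, according to the sign of
`s - t`: the hyperplane `s = t` cuts the cone of `G_0` into those of `G_1` and `G_2`, whose common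
face is the cone of `G_3`.
-/

section Cone

open PointedCone Set

section Generators

lemma mem_hull_insert {R M : Type*} [Semiring R] [PartialOrder R] [IsOrderedRing R]
    [AddCommMonoid M] [Module R M] {x z : M} {S : Set M} :
    z ∈ hull R (insert x S) ↔ ∃ r : R, 0 ≤ r ∧ ∃ y ∈ hull R S, z = r • x + y := by
  rw [hull, Submodule.mem_span_insert, Subtype.exists]
  simp only [exists_prop, Nonneg.mk_smul]

variable {R M : Type*} [CommRing R] [LinearOrder R] [IsOrderedRing R] [AddCommGroup M] [Module R M]

lemma hull_insert_insert_eq_union (x y : M) (S : Set M) :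
    (hull R (insert x (insert y S)) : Set M) =
      (hull R (insert (x + y) (insert x S)) : Set M) ∪ hull R (insert (x + y) (insert y S)) := by
  ext z
  simp only [mem_union, SetLike.mem_coe, mem_hull_insert]
  constructor
  · rintro ⟨s, hs, _, ⟨t, ht, u, hu, rfl⟩, rfl⟩
    rcases le_total t s with hts | hst
    · exact .inl ⟨t, ht, _, ⟨s - t, sub_nonneg.2 hts, u, hu, rfl⟩, by module⟩
    · exact .inr ⟨s, hs, _, ⟨t - s, sub_nonneg.2 hst, u, hu, rfl⟩, by module⟩
  · rintro (⟨s, hs, _, ⟨t, ht, u, hu, rfl⟩, rfl⟩ | ⟨s, hs, _, ⟨t, ht, u, hu, rfl⟩, rfl⟩)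
    · exact ⟨s + t, add_nonneg hs ht, _, ⟨s, hs, u, hu, rfl⟩, by module⟩
    · exact ⟨s, hs, _, ⟨s + t, add_nonneg hs ht, u, hu, rfl⟩, by module⟩

lemma hull_insert_add_inter {x y : M} {S : Set M}
    (hx : ∀ r : R, r • x ∈ Submodule.span R (insert y S) → r = 0)
    (hy : ∀ r : R, r • y ∈ Submodule.span R (insert x S) → r = 0) :
    (hull R (insert (x + y) (insert x S)) : Set M) ∩ hull R (insert (x + y) (insert y S)) =
      hull R (insert (x + y) S) := by
  refine Subset.antisymm ?_ <| subset_inter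
    (Submodule.span_mono <| insert_subset_insert <| subset_insert x S)
    (Submodule.span_mono <| insert_subset_insert <| subset_insert y S)
  rintro z ⟨hz, hz'⟩
  simp only [SetLike.mem_coe, mem_hull_insert] at hz hz' ⊢
  obtain ⟨s, hs, _, ⟨t, ht, u, hu, rfl⟩, rfl⟩ := hz
  obtain ⟨s', -, _, ⟨t', ht', u', hu', rfl⟩, hz⟩ := hz'
  have hsub : u' - u ∈ Submodule.span R S :=
    sub_mem (hull_le_span R S hu') (hull_le_span R S hu)
  have hrel : (s + t - s') • x + (s - s' - t') • y = u' - u := by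
    linear_combination (norm := module) hz
  have hcoeff_x : s + t - s' = 0 := hx _ <| Submodule.mem_span_insert.2
    ⟨-(s - s' - t'), _, hsub, by rw [← hrel]; module⟩
  have hcoeff_y : s - s' - t' = 0 := hy _ <| Submodule.mem_span_insert.2
    ⟨-(s + t - s'), _, hsub, by rw [← hrel]; module⟩
  have ht_zero : t = 0 := ((add_eq_zero_iff_of_nonneg ht ht').1 <| by
    linear_combination hcoeff_x - hcoeff_y).1
  exact ⟨s, hs, u, hu, by rw [ht_zero]; module⟩

end Generators

lemma finrank_span_hull_image {R M ι : Type*} [CommRing R] [PartialOrder R] [IsOrderedRing R]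
    [Nontrivial R] [AddCommGroup M] [Module R M] {v : ι → M} {s : Finset ι}
    (hs : LinearIndepOn R v s) :
    Module.finrank R (Submodule.span R (hull R (v '' s) : Set M)) = s.card := by
  rw [hull, Submodule.span_span_of_tower, image_eq_range]
  exact (finrank_span_eq_card hs).trans (Fintype.card_coe s)

section Family

variable {R M ι : Type*} [DecidableEq ι] {v : ι → M} {s : Finset ι} {a b c : ι}

lemma image_erase_eq_insert (ha : a ∈ s) (hab : a ≠ b) :
    v '' ↑(s.erase b) = insert (v a) (v '' ↑((s.erase a).erase b)) := by
  rw [Finset.erase_right_comm, ← image_insert_eq, ← Finset.coe_insert,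
    Finset.insert_erase (Finset.mem_erase.2 ⟨hab, ha⟩)]

variable [AddCommGroup M]

section Ordered

variable [CommRing R] [LinearOrder R] [IsOrderedRing R] [Module R M]

lemma hull_image_eq_union (ha : a ∈ s) (hb : b ∈ s) (hab : a ≠ b) (hc : v c = v a + v b) :
    (hull R (v '' s) : Set M) =
      (hull R (v '' ↑(insert c (s.erase b))) : Set M) ∪ hull R (v '' ↑(insert c (s.erase a))) := by
  have hs : v '' s = insert (v a) (v '' ↑(s.erase a)) := by
    rw [← image_insert_eq, ← Finset.coe_insert, Finset.insert_erase ha]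
  rw [hs, Finset.coe_insert, Finset.coe_insert, image_insert_eq, image_insert_eq,
    image_erase_eq_insert ha hab, image_erase_eq_insert hb hab.symm,
    Finset.erase_right_comm (a := b), hc]
  exact hull_insert_insert_eq_union _ _ _

lemma hull_image_inter (hs : LinearIndepOn R v s) (ha : a ∈ s) (hb : b ∈ s) (hab : a ≠ b)
    (hc : v c = v a + v b) :
    (hull R (v '' ↑(insert c (s.erase b))) : Set M) ∩ hull R (v '' ↑(insert c (s.erase a))) =
      hull R (v '' ↑(insert c ((s.erase a).erase b))) := by
  have hva (r : R) := hs.eq_zero_of_smul_mem_span ha r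
  have hvb (r : R) := hs.eq_zero_of_smul_mem_span hb r
  rw [← Finset.coe_erase, image_erase_eq_insert hb hab.symm, Finset.erase_right_comm] at hva
  rw [← Finset.coe_erase, image_erase_eq_insert ha hab] at hvb
  simp only [Finset.coe_insert, image_insert_eq]
  rw [image_erase_eq_insert ha hab, image_erase_eq_insert hb hab.symm,
    Finset.erase_right_comm (a := b), hc]
  exact hull_insert_add_inter hva hvb

end Ordered

section Exchange

variable [Ring R] [Nontrivial R] [Module R M]

lemma apply_notMem_span_image_erase (hs : LinearIndepOn R v s) (ha : a ∈ s) (hb : b ∈ s)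
    (hab : a ≠ b) (hc : v c = v a + v b) : v c ∉ Submodule.span R (v '' ↑(s.erase b)) := by
  have hva : v a ∈ Submodule.span R (v '' ↑(s.erase b)) :=
    Submodule.subset_span <| mem_image_of_mem v <| by simp [ha, hab]
  rw [hc, Submodule.add_mem_iff_right _ hva, Finset.coe_erase]
  exact hs.notMem_span hb

lemma notMem_erase_of_linearIndepOn (hs : LinearIndepOn R v s) (ha : a ∈ s) (hb : b ∈ s)
    (hab : a ≠ b) (hc : v c = v a + v b) : c ∉ s.erase b := fun hmem =>
  apply_notMem_span_image_erase hs ha hb hab hc <| Submodule.subset_span <|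
    mem_image_of_mem v hmem

lemma card_insert_erase_of_linearIndepOn (hs : LinearIndepOn R v s) (ha : a ∈ s) (hb : b ∈ s)
    (hab : a ≠ b) (hc : v c = v a + v b) : (insert c (s.erase b)).card = s.card := by
  rw [Finset.card_insert_of_notMem (notMem_erase_of_linearIndepOn hs ha hb hab hc),
    Finset.card_erase_add_one hb]

lemma card_insert_erase_erase_of_linearIndepOn (hs : LinearIndepOn R v s) (ha : a ∈ s)
    (hb : b ∈ s) (hab : a ≠ b) (hc : v c = v a + v b) :
    (insert c ((s.erase a).erase b)).card = s.card - 1 := by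
  have hcs : c ∉ (s.erase a).erase b := fun hmem =>
    notMem_erase_of_linearIndepOn hs ha hb hab hc <|
      Finset.erase_subset_erase b (Finset.erase_subset a s) hmem
  rw [Finset.card_insert_of_notMem hcs,
    Finset.card_erase_add_one (Finset.mem_erase.2 ⟨hab.symm, hb⟩), Finset.card_erase_of_mem ha]

end Exchange

lemma linearIndepOn_insert_erase [DivisionRing R] [Module R M] (hs : LinearIndepOn R v s)
    (ha : a ∈ s) (hb : b ∈ s) (hab : a ≠ b) (hc : v c = v a + v b) :
    LinearIndepOn R v ↑(insert c (s.erase b)) := by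
  rw [Finset.coe_insert]
  exact (hs.mono <| Finset.erase_subset b s).insert
    (apply_notMem_span_image_erase hs ha hb hab hc)

end Family

end Cone

section Digraph

variable {V : Type*}

/-- The simple graph underlying a set of directed edges on an arbitrary vertex type; `toSG` is the
case `V = Fin (n + 1)`. -/
def edgeGraph (E : Set (V × V)) : SimpleGraph V := SimpleGraph.fromRel fun a b => (a, b) ∈ E

section Graph

variable {E : Set (V × V)}

lemma reachable_edgeGraph_of_mem {e : V × V} (he : e ∈ E) :
    (edgeGraph E).Reachable e.1 e.2 := by
  by_cases hne : e.1 = e.2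
  · rw [hne]
  · exact SimpleGraph.Adj.reachable ⟨hne, .inl he⟩

lemma deleteEdges_edgeGraph_le (a b : V) :
    (edgeGraph E).deleteEdges {s(a, b)} ≤ edgeGraph (E \ {(a, b)}) := by
  intro u w huw
  obtain ⟨⟨hne, he⟩, hab⟩ := SimpleGraph.deleteEdges_adj.1 huw
  rw [Set.mem_singleton_iff, Sym2.eq_iff, not_or] at hab
  exact ⟨hne, he.imp (fun he => ⟨he, fun h => hab.1 (Prod.mk.inj h)⟩)
    (fun he => ⟨he, fun h => hab.2 (Prod.mk.inj h).symm⟩)⟩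

lemma edgeGraph_diff_singleton_le {a b : V} (hba : (b, a) ∉ E) :
    edgeGraph (E \ {(a, b)}) ≤ (edgeGraph E).deleteEdges {s(a, b)} := by
  rintro u w ⟨hne, he⟩
  refine SimpleGraph.deleteEdges_adj.2 ⟨⟨hne, he.imp And.left And.left⟩, fun h => ?_⟩
  rcases Sym2.eq_iff.1 h with ⟨rfl, rfl⟩ | ⟨rfl, rfl⟩
  · exact he.elim (fun he => he.2 rfl) (fun he => hba he.1)
  · exact he.elim (fun he => hba he.1) (fun he => he.2 rfl)

end Graph

variable [DecidableEq V]

/-- The vector `e_a - e_b` of a directed edge `(a, b)`, with coordinates in any ring and indexed by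
any vertex type; `ev` is the case of real coordinates indexed by `Fin (n + 1)`. -/
def edgeVec (R : Type*) [Ring R] (e : V × V) : V → R := Pi.single e.1 1 - Pi.single e.2 1

section Span

variable {R : Type*} [Ring R] {E : Set (V × V)} {u w : V}

lemma edgeVec_add_edgeVec (a b c : V) :
    edgeVec R (a, b) + edgeVec R (b, c) = edgeVec R (a, c) :=
  sub_add_sub_cancel _ _ _

lemma edgeVec_swap (e : V × V) : edgeVec R e.swap = -edgeVec R e := (neg_sub _ _).symm

lemma edgeVec_mem_span_of_adj (h : (edgeGraph E).Adj u w) :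
    edgeVec R (u, w) ∈ Submodule.span R (edgeVec R '' E) := by
  rcases h.2 with he | he
  · exact Submodule.subset_span ⟨_, he, rfl⟩
  · rw [← Prod.swap_prod_mk, edgeVec_swap]
    exact neg_mem (Submodule.subset_span ⟨_, he, rfl⟩)

lemma edgeVec_mem_span_of_reachable (h : (edgeGraph E).Reachable u w) :
    edgeVec R (u, w) ∈ Submodule.span R (edgeVec R '' E) := by
  obtain ⟨p⟩ := h
  induction p with
  | nil => simp [edgeVec]
  | cons hadj _ ih =>
    rw [← edgeVec_add_edgeVec]
    exact add_mem (edgeVec_mem_span_of_adj hadj) ih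

/- The sum of the coordinates over the component of `u` vanishes on every edge of `E`, and is `1` on
`e_u - e_w` when `w` lies outside that component. -/
lemma reachable_of_edgeVec_mem_span [Nontrivial R] [Finite V]
    (h : edgeVec R (u, w) ∈ Submodule.span R (edgeVec R '' E)) : (edgeGraph E).Reachable u w := by
  classical
  cases nonempty_fintype V
  let φ : (V → R) →ₗ[R] R := Fintype.linearCombination R
    fun x => if (edgeGraph E).Reachable u x then 1 else 0
  have hφ (e : V × V) : φ (edgeVec R e) = (if (edgeGraph E).Reachable u e.1 then 1 else 0) -
      if (edgeGraph E).Reachable u e.2 then 1 else 0 := by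
    simp only [φ, edgeVec, map_sub, Fintype.linearCombination_apply_single, one_smul]
  have hker : Submodule.span R (edgeVec R '' E) ≤ LinearMap.ker φ := by
    rw [Submodule.span_le, Set.image_subset_iff]
    intro e he
    have hcomp : (edgeGraph E).Reachable u e.1 ↔ (edgeGraph E).Reachable u e.2 :=
      ⟨fun h => h.trans (reachable_edgeGraph_of_mem he),
        fun h => h.trans (reachable_edgeGraph_of_mem he).symm⟩
    simp [hφ, hcomp]
  have hzero : φ (edgeVec R (u, w)) = 0 := hker h
  by_contra huw
  simp [hφ, huw] at hzero

end Span

theorem linearIndepOn_edgeVec_of_isAcyclic (K : Type*) [DivisionRing K] [Finite V]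
    {E : Set (V × V)} (hE : ∀ e ∈ E, e.swap ∉ E) (hac : (edgeGraph E).IsAcyclic) :
    LinearIndepOn K (edgeVec K) E := by
  refine linearIndepOn_iff_notMem_span.2 fun ⟨a, b⟩ hab hspan => ?_
  have hne : a ≠ b := by
    rintro rfl
    exact hE _ hab hab
  have hbridge : (edgeGraph E).IsBridge s(a, b) :=
    SimpleGraph.isAcyclic_iff_forall_adj_isBridge.1 hac ⟨hne, .inl hab⟩
  exact hbridge <|
    (reachable_of_edgeVec_mem_span hspan).mono (edgeGraph_diff_singleton_le (hE _ hab))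

theorem isAcyclic_edgeGraph_of_linearIndepOn {R : Type*} [Ring R] [Nontrivial R]
    {E : Set (V × V)} (hE : LinearIndepOn R (edgeVec R) E) : (edgeGraph E).IsAcyclic := by
  have hbridge {a b : V} (hab : (a, b) ∈ E) : (edgeGraph E).IsBridge s(a, b) := fun hreach =>
    hE.notMem_span hab <| edgeVec_mem_span_of_reachable <|
      hreach.mono (deleteEdges_edgeGraph_le a b)
  refine SimpleGraph.isAcyclic_iff_forall_adj_isBridge.2 fun a b hadj => ?_
  rcases hadj.2 with hab | hba
  · exact hbridge hab
  · rw [Sym2.eq_swap]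
    exact hbridge hba

/-- The cone `C(G)` of a directed graph, over any ordered ring of scalars and any vertex type; it is
bundled as a pointed cone. -/
def edgeCone (R : Type*) [Ring R] [PartialOrder R] [IsOrderedRing R] (E : Finset (V × V)) :
    PointedCone R (V → R) :=
  PointedCone.hull R (edgeVec R '' E)

theorem stmt5_general (K : Type*) [Field K] [LinearOrder K] [IsStrictOrderedRing K] [Finite V]
    {E : Finset (V × V)} (hE : ∀ e ∈ E, e.swap ∉ E) (hac : (edgeGraph (E : Set (V × V))).IsAcyclic)
    {i j k : V} (hij : (i, j) ∈ E) (hjk : (j, k) ∈ E) :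
    let E₁ := insert (i, k) (E.erase (j, k))
    let E₂ := insert (i, k) (E.erase (i, j))
    let E₃ := insert (i, k) ((E.erase (i, j)).erase (j, k))
    let dimCone (F : Finset (V × V)) : ℕ :=
      Module.finrank K (Submodule.span K (edgeCone K F : Set (V → K)))
    ((edgeGraph (E₁ : Set (V × V))).IsAcyclic ∧ (edgeGraph (E₂ : Set (V × V))).IsAcyclic ∧
      (edgeGraph (E₃ : Set (V × V))).IsAcyclic) ∧
    (edgeCone K E : Set (V → K)) = (edgeCone K E₁ : Set (V → K)) ∪ edgeCone K E₂ ∧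
    (dimCone E = E.card ∧ dimCone E₁ = E.card ∧ dimCone E₂ = E.card) ∧
    (edgeCone K E₃ : Set (V → K)) = (edgeCone K E₁ : Set (V → K)) ∩ edgeCone K E₂ ∧
    dimCone E₃ = E.card - 1 := by
  intro E₁ E₂ E₃ dimCone
  have hne : (i, j) ≠ (j, k) := fun h => by
    obtain ⟨rfl, rfl⟩ := Prod.mk.inj h
    exact hE _ hij hij
  have hadd : edgeVec K (i, k) = edgeVec K (i, j) + edgeVec K (j, k) :=
    (edgeVec_add_edgeVec i j k).symm
  have hadd' := hadd.trans (add_comm _ _)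
  have li : LinearIndepOn K (edgeVec K) (E : Set (V × V)) :=
    linearIndepOn_edgeVec_of_isAcyclic K hE hac
  have li₁ := linearIndepOn_insert_erase li hij hjk hne hadd
  have li₂ := linearIndepOn_insert_erase li hjk hij hne.symm hadd'
  have li₃ : LinearIndepOn K (edgeVec K) (E₃ : Set (V × V)) :=
    li₁.mono <| Finset.coe_subset.2 <| Finset.insert_subset_insert _ <|
      Finset.erase_subset_erase _ <| Finset.erase_subset _ _
  exact ⟨⟨isAcyclic_edgeGraph_of_linearIndepOn li₁, isAcyclic_edgeGraph_of_linearIndepOn li₂,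
      isAcyclic_edgeGraph_of_linearIndepOn li₃⟩,
    hull_image_eq_union hij hjk hne hadd,
    ⟨finrank_span_hull_image li,
      (finrank_span_hull_image li₁).trans (card_insert_erase_of_linearIndepOn li hij hjk hne hadd),
      (finrank_span_hull_image li₂).trans
        (card_insert_erase_of_linearIndepOn li hjk hij hne.symm hadd')⟩,
    (hull_image_inter li hij hjk hne hadd).symm,
    (finrank_span_hull_image li₃).trans
      (card_insert_erase_erase_of_linearIndepOn li hij hjk hne hadd)⟩

end Digraph

lemma cone_eq_edgeCone (n : ℕ) :
    (cone : EdgeSet n → Set (Vtype n)) = fun E => (edgeCone ℝ E : Set (Vtype n)) := by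
  ext E x
  rw [edgeCone, SetLike.mem_coe, Submodule.mem_span_image_finset_iff_exists_fun']
  constructor
  · rintro ⟨c, hc, rfl⟩
    exact ⟨fun e => ⟨c e, hc e⟩, rfl⟩
  · rintro ⟨c, rfl⟩
    exact ⟨fun e => c e, fun e => (c e).2, rfl⟩

/- STATEMENT 5 -/
theorem stmt5 {n : ℕ} (hn : 1 ≤ n) (E : EdgeSet n) (hE : IsGraph E) (hac : Acyclic E)
    (d : ℕ) (hd : E.card = d) (i j k : Fin (n+1)) (hij : i < j) (hjk : j < k)
    (h1 : (i, j) ∈ E) (h2 : (j, k) ∈ E) :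
    (Acyclic (red1 E i j k) ∧ Acyclic (red2 E i j k) ∧ Acyclic (red3 E i j k)) ∧
    cone E = cone (red1 E i j k) ∪ cone (red2 E i j k) ∧
    (Module.finrank ℝ (Submodule.span ℝ (cone E)) = d ∧
      Module.finrank ℝ (Submodule.span ℝ (cone (red1 E i j k))) = d ∧
      Module.finrank ℝ (Submodule.span ℝ (cone (red2 E i j k))) = d) ∧
    cone (red3 E i j k) = cone (red1 E i j k) ∩ cone (red2 E i j k) ∧
    Module.finrank ℝ (Submodule.span ℝ (cone (red3 E i j k))) = d - 1 := by
  subst hd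
  rw [cone_eq_edgeCone]
  exact stmt5_general ℝ (fun e he hswap => (hE e he).asymm (hE _ hswap)) hac h1 h2

end RPaper
end

section
/- Let G be a graph on [n+1]. Suppose S and S' are finite collections of linearly independent subsets of Φ⁺ such that the relative interior of P(G) is the disjoint union, over A ∈ S, of the relative interiors of the simplices conv({0} ∪ A), and likewise the relative interior of P(G) is the disjoint union, over A ∈ S', of the relative interiors of the simplices conv({0} ∪ A). Then for every i ≥ 0, the number of sets A ∈ S with |A| = i equals the number of sets A ∈ S' with |A| = i. -/
open scoped BigOperators

namespace RPaper

/-!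
Linearly independent roots are unimodular: reading the roots as the edges of a forest, each
coefficient of a combination is a sum of its coordinates over one side of a cut, so integral points
have integral coefficients. Hence the relatively open simplex on `d` such roots contains
`m.choose d` points of the lattice `(m + 1)⁻¹ ℤⁿ⁺¹`, one for each choice of positive integers
`z₁, …, z_d` with sum at most `m`. A disjoint union of simplices `S` therefore contains
`∑ A ∈ S, m.choose |A|` of them. The family of these numbers depends only on the union, and it
determines how many `A` have each size because `m.choose k` is unitriangular in `m` and `k`.
-/

section Simplex

variable {ι : Type*} [Fintype ι]

/-- The corner simplex `conv ({0} ∪ {e_i})` in coordinates; every simplex `conv ({0} ∪ A)` with `A`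
linearly independent is an injective linear image of it. -/
def cornerSimplex (ι : Type*) [Fintype ι] : Set (ι → ℝ) :=
  {c | (∀ i, 0 ≤ c i) ∧ ∑ i, c i ≤ 1}

theorem convex_cornerSimplex : Convex ℝ (cornerSimplex ι) := by
  rintro c ⟨hc, hc'⟩ d ⟨hd, hd'⟩ a b ha hb hab
  refine ⟨fun i => add_nonneg (mul_nonneg ha (hc i)) (mul_nonneg hb (hd i)), ?_⟩
  calc ∑ i, (a • c + b • d) i = a * ∑ i, c i + b * ∑ i, d i := by
        simp [Finset.sum_add_distrib, Finset.mul_sum]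
    _ ≤ a * 1 + b * 1 := by gcongr
    _ = 1 := by rw [mul_one, mul_one, hab]

theorem convexHull_insert_zero_range_single [DecidableEq ι] :
    convexHull ℝ (insert 0 (Set.range fun i : ι => Pi.single i (1 : ℝ))) = cornerSimplex ι := by
  refine (convexHull_min ?_ convex_cornerSimplex).antisymm ?_
  · rintro _ (rfl | ⟨i, rfl⟩)
    · simp [cornerSimplex]
    · have hi : (0 : ι → ℝ) ≤ Pi.single i 1 := Pi.single_nonneg.2 zero_le_one
      exact ⟨hi, by simp⟩
  · rintro c ⟨hc, hc'⟩
    refine mem_convexHull_of_exists_fintype (ι := Option ι) (fun o => o.elim (1 - ∑ i, c i) c)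
      (fun o => o.elim 0 fun i => Pi.single i 1) ?_ ?_ ?_ ?_
    · rintro (_ | i)
      exacts [sub_nonneg.2 hc', hc i]
    · simp [Fintype.sum_option]
    · rintro (_ | i)
      exacts [Set.mem_insert _ _, Set.mem_insert_of_mem _ ⟨i, rfl⟩]
    · simpa [Fintype.sum_option] using (pi_eq_sum_univ' c).symm

theorem convexHull_insert_zero_range {V : Type*} [AddCommGroup V] [Module ℝ V] (v : ι → V) :
    convexHull ℝ (insert 0 (Set.range v)) = Fintype.linearCombination ℝ v '' cornerSimplex ι := by
  classical
  rw [← convexHull_insert_zero_range_single, LinearMap.image_convexHull, Set.image_insert_eq,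
    map_zero, ← Set.range_comp]
  simp [Function.comp_def]

theorem interior_setOf_sum_le_one [Nonempty ι] :
    interior {c : ι → ℝ | ∑ i, c i ≤ 1} = {c | ∑ i, c i < 1} := by
  classical
  let σ : (ι → ℝ) →ₗ[ℝ] ℝ := Fintype.linearCombination ℝ fun _ => 1
  have hσ (c : ι → ℝ) : σ c = ∑ i, c i := by simp [σ, Fintype.linearCombination_apply]
  have hσ_surj : Function.Surjective σ := fun r =>
    ⟨Pi.single (Classical.arbitrary ι) r, by simp [hσ]⟩
  have hσ_open : IsOpenMap σ := σ.isOpenMap_of_finiteDimensional hσ_surj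
  have := hσ_open.preimage_interior_eq_interior_preimage σ.continuous_of_finiteDimensional
    (Set.Iic 1)
  simpa only [interior_Iic, Set.preimage, Set.mem_Iio, Set.mem_Iic, hσ] using this.symm

theorem interior_cornerSimplex :
    interior (cornerSimplex ι) = {c | (∀ i, 0 < c i) ∧ ∑ i, c i < 1} := by
  cases isEmpty_or_nonempty ι
  · simp [cornerSimplex]
  have hpi : interior {c : ι → ℝ | ∀ i, 0 ≤ c i} = {c | ∀ i, 0 < c i} := by
    have := interior_pi_set (Set.finite_univ (α := ι)) (s := fun _ => Set.Ici (0 : ℝ))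
    simpa only [interior_Ici, Set.pi, Set.mem_univ, Set.mem_Ici, Set.mem_Ioi, true_imp_iff]
      using this
  rw [cornerSimplex, Set.ofPred_and, interior_inter, hpi, interior_setOf_sum_le_one,
    ← Set.ofPred_and]

theorem intrinsicInterior_eq_image_interior_preimage {X V : Type*} [TopologicalSpace X]
    [AddCommGroup V] [Module ℝ V] [TopologicalSpace V] {f : X → V} (hf : Topology.IsEmbedding f)
    {s : Set V} (hs : Set.range f = affineSpan ℝ s) :
    intrinsicInterior ℝ s = f '' interior (f ⁻¹' s) := by
  let h : X ≃ₜ affineSpan ℝ s := hf.toHomeomorph.trans (Homeomorph.setCongr hs)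
  have hh : (↑) ∘ h = f := rfl
  rw [intrinsicInterior, ← hh, Set.preimage_comp, ← h.preimage_interior, Set.image_comp,
    h.surjective.image_preimage]

theorem intrinsicInterior_convexHull_insert_zero_range {V : Type*} [AddCommGroup V] [Module ℝ V]
    [TopologicalSpace V] [IsTopologicalAddGroup V] [ContinuousSMul ℝ V] [T2Space V] {v : ι → V}
    (hv : LinearIndependent ℝ v) :
    intrinsicInterior ℝ (convexHull ℝ (insert 0 (Set.range v))) =
      Fintype.linearCombination ℝ v '' {c | (∀ i, 0 < c i) ∧ ∑ i, c i < 1} := by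
  have hinj := hv.fintypeLinearCombination_injective
  have hemb : Topology.IsEmbedding (Fintype.linearCombination ℝ v) :=
    (LinearMap.isClosedEmbedding_of_injective (LinearMap.ker_eq_bot.2 hinj)).isEmbedding
  have hspan : Set.range (Fintype.linearCombination ℝ v) =
      affineSpan ℝ (convexHull ℝ (insert 0 (Set.range v))) := by
    rw [affineSpan_convexHull, affineSpan_insert_zero, ← Fintype.range_linearCombination]
    rfl
  rw [intrinsicInterior_eq_image_interior_preimage hemb hspan, convexHull_insert_zero_range,
    hinj.preimage_image, interior_cornerSimplex]

end Simplex

section Counting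

theorem encard_setOf_sum_le (ι : Type*) [Fintype ι] (n : ℕ) :
    {b : ι → ℕ | ∑ i, b i ≤ n}.encard = (n + Fintype.card ι).choose (Fintype.card ι) := by
  classical
  -- The slack `n - ∑ i, b i`, recorded as one more entry, turns the inequality into an equality.
  let withSlack := (Finset.univ : Finset (Option ι)).finsuppAntidiag n
  let dropSlack (b : Option ι →₀ ℕ) (i : ι) : ℕ := b (some i)
  have hmem (b : Option ι →₀ ℕ) : b ∈ withSlack ↔ b none + ∑ i, b (some i) = n := by
    simp [withSlack, Fintype.sum_option]
  have himage : dropSlack '' withSlack = {b : ι → ℕ | ∑ i, b i ≤ n} := by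
    ext b
    constructor
    · rintro ⟨b, hb, rfl⟩
      exact (Nat.le_add_left _ _).trans_eq ((hmem b).1 hb)
    · intro hb
      refine ⟨Finsupp.equivFunOnFinite.symm fun o => o.elim (n - ∑ i, b i) b, ?_, rfl⟩
      simpa [hmem] using Nat.sub_add_cancel hb
  have hinj : Set.InjOn dropSlack withSlack := by
    intro b hb b' hb' h
    have hsome (i : ι) : b (some i) = b' (some i) := congrFun h i
    have hsum := ((hmem b).1 hb).trans ((hmem b').1 hb').symm
    ext (_ | i)
    · simpa [hsome] using hsum
    · exact hsome i
  rw [← himage, hinj.encard_image, Set.encard_coe_eq_coe_finsetCard,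
    Finset.card_finsuppAntidiag_nat_eq_choose, Finset.card_univ, Fintype.card_option,
    Nat.add_right_comm, Nat.add_sub_cancel, Nat.add_comm, Nat.choose_symm_add]

theorem encard_setOf_pos_sum_le (ι : Type*) [Fintype ι] (m : ℕ) :
    {z : ι → ℕ | (∀ i, 0 < z i) ∧ ∑ i, z i ≤ m}.encard = m.choose (Fintype.card ι) := by
  have hsum (b : ι → ℕ) : ∑ i, (b i + 1) = ∑ i, b i + Fintype.card ι := by
    simp [Finset.sum_add_distrib]
  have hshift : {z : ι → ℕ | (∀ i, 0 < z i) ∧ ∑ i, z i ≤ m} =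
      (fun b i => b i + 1) '' {b : ι → ℕ | ∑ i, b i + Fintype.card ι ≤ m} := by
    ext z
    constructor
    · rintro ⟨hz, hzm⟩
      have hz' : (fun i => z i - 1 + 1) = z := funext fun i => Nat.sub_add_cancel (hz i)
      exact ⟨fun i => z i - 1, by rwa [Set.mem_ofPred_eq, ← hsum, hz'], hz'⟩
    · rintro ⟨b, hb, rfl⟩
      exact ⟨fun i => Nat.succ_pos _, (hsum b).trans_le hb⟩
  have hinj : Function.Injective fun (b : ι → ℕ) i => b i + 1 := fun b b' h =>
    funext fun i => Nat.succ_injective (congrFun h i)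
  rw [hshift, hinj.encard_image]
  obtain hm | hm := lt_or_ge m (Fintype.card ι)
  · have hempty (b : ι → ℕ) : ¬ ∑ i, b i + Fintype.card ι ≤ m := by lia
    simp [hempty, Nat.choose_eq_zero_of_lt hm]
  · obtain ⟨n, rfl⟩ := Nat.exists_eq_add_of_le' hm
    simpa only [add_le_add_iff_right] using encard_setOf_sum_le ι n

theorem sum_choose_eq_sum_card_filter_mul {α : Type*} (S : Finset α) (d : α → ℕ) (m : ℕ) :
    ∑ a ∈ S, m.choose (d a) =
      ∑ k ∈ Finset.range (m + 1), (S.filter (d · = k)).card * m.choose k := by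
  have hsmall : ∀ a ∈ S, m.choose (d a) ≠ 0 → d a ∈ Finset.range (m + 1) := fun a _ ha =>
    Finset.mem_range_succ_iff.2 (Nat.choose_ne_zero_iff.1 ha)
  rw [← Finset.sum_filter_of_ne hsmall, ← Finset.sum_fiberwise_eq_sum_filter]
  refine Finset.sum_congr rfl fun k _ => Finset.sum_const_nat fun a ha => ?_
  rw [(Finset.mem_filter.1 ha).2]

theorem card_filter_eq_of_sum_choose_eq {α β : Type*} {S : Finset α} {T : Finset β}
    {d : α → ℕ} {e : β → ℕ}
    (h : ∀ m : ℕ, ∑ a ∈ S, m.choose (d a) = ∑ b ∈ T, m.choose (e b)) (i : ℕ) :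
    (S.filter (d · = i)).card = (T.filter (e · = i)).card := by
  induction i using Nat.strong_induction_on with
  | _ i ih =>
    have hi := h i
    rw [sum_choose_eq_sum_card_filter_mul, sum_choose_eq_sum_card_filter_mul,
      Finset.sum_range_succ, Finset.sum_range_succ,
      Finset.sum_congr rfl fun k hk => by rw [ih k (Finset.mem_range.1 hk)]] at hi
    simpa using hi

end Counting

section Lattice

variable {V : Type*} [AddCommGroup V]

/-- The points of `P` in the refined lattice `t⁻¹ L`; multiplication by `t` identifies them with the
points of `L` in the `t`-th dilate of `P`. -/
def latticePoints (L : AddSubgroup V) (t : ℕ) (P : Set V) : Set V := P ∩ (t • ·) ⁻¹' L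

theorem encard_latticePoints_biUnion {α : Type*} (L : AddSubgroup V) (t : ℕ) (S : Finset α)
    {P : α → Set V} (hP : (S : Set α).PairwiseDisjoint P) :
    (latticePoints L t (⋃ a ∈ S, P a)).encard = ∑ a ∈ S, (latticePoints L t (P a)).encard := by
  have hdisj : (S : Set α).PairwiseDisjoint fun a => latticePoints L t (P a) :=
    hP.mono fun a => Set.inter_subset_left
  rw [← finsum_mem_coe_finset, ← S.finite_toSet.encard_biUnion hdisj, latticePoints,
    Set.iUnion₂_inter]
  rfl

variable [Module ℝ V]

/-- A finite family is unimodular with respect to a subgroup `L` (in practice a lattice) if it is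
linearly independent and is a `ℤ`-basis of the points of `L` in its real span. -/
structure IsUnimodular {ι : Type*} [Fintype ι] (L : AddSubgroup V) (v : ι → V) : Prop where
  linearIndependent : LinearIndependent ℝ v
  linearCombination_mem_iff (c : ι → ℝ) :
    Fintype.linearCombination ℝ v c ∈ L ↔ ∃ z : ι → ℤ, c = fun i => (z i : ℝ)

theorem IsUnimodular.nsmul_linearCombination_mem_iff {ι : Type*} [Fintype ι] {L : AddSubgroup V}
    {v : ι → V} (hv : IsUnimodular L v) (t : ℕ) (c : ι → ℝ) :
    t • Fintype.linearCombination ℝ v c ∈ L ↔ ∃ z : ι → ℤ, ∀ i, t * c i = z i := by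
  simp [← map_nsmul, hv.linearCombination_mem_iff, funext_iff]

variable [TopologicalSpace V] [IsTopologicalAddGroup V] [ContinuousSMul ℝ V] [T2Space V]

theorem IsUnimodular.latticePoints_intrinsicInterior {ι : Type*} [Fintype ι] {L : AddSubgroup V}
    {v : ι → V} (hv : IsUnimodular L v) (m : ℕ) :
    latticePoints L (m + 1) (intrinsicInterior ℝ (convexHull ℝ (insert 0 (Set.range v)))) =
      (fun z : ι → ℕ => Fintype.linearCombination ℝ v fun i => z i / (m + 1 : ℝ)) ''
        {z | (∀ i, 0 < z i) ∧ ∑ i, z i ≤ m} := by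
  have hm : (0 : ℝ) < m + 1 := by positivity
  rw [intrinsicInterior_convexHull_insert_zero_range hv.linearIndependent]
  ext x
  constructor
  · rintro ⟨⟨c, ⟨hc, hc'⟩, rfl⟩, hL⟩
    obtain ⟨z, hzc⟩ := (hv.nsmul_linearCombination_mem_iff (m + 1) c).1 hL
    rw [Nat.cast_add_one] at hzc
    have hz0 (i : ι) : 0 < z i := by exact_mod_cast hzc i ▸ mul_pos hm (hc i)
    lift z to ι → ℕ using fun i => (hz0 i).le
    simp only [Int.cast_natCast, Int.natCast_pos] at hzc hz0
    refine ⟨z, ⟨hz0, ?_⟩, ?_⟩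
    · have : ∑ i, (z i : ℝ) < m + 1 := by
        calc ∑ i, (z i : ℝ) = (m + 1) * ∑ i, c i := by simp [Finset.mul_sum, hzc]
          _ < m + 1 := mul_lt_of_lt_one_right hm hc'
      exact Nat.lt_succ_iff.1 (by exact_mod_cast this)
    · congr! with i
      rw [div_eq_iff hm.ne', mul_comm, hzc]
  · rintro ⟨z, ⟨hz, hzm⟩, rfl⟩
    refine ⟨⟨_, ⟨fun i => div_pos (Nat.cast_pos.2 (hz i)) hm, ?_⟩, rfl⟩, ?_⟩
    · rw [← Finset.sum_div, div_lt_one hm]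
      exact_mod_cast Nat.lt_succ_iff.2 hzm
    · refine (hv.nsmul_linearCombination_mem_iff (m + 1) _).2 ⟨fun i => z i, fun i => ?_⟩
      rw [Nat.cast_add_one, mul_div_cancel₀ _ hm.ne', Int.cast_natCast]

theorem IsUnimodular.encard_latticePoints_intrinsicInterior {ι : Type*} [Fintype ι]
    {L : AddSubgroup V} {v : ι → V} (hv : IsUnimodular L v) (m : ℕ) :
    (latticePoints L (m + 1)
        (intrinsicInterior ℝ (convexHull ℝ (insert 0 (Set.range v))))).encard =
      m.choose (Fintype.card ι) := by
  have hm : (m + 1 : ℝ) ≠ 0 := by positivity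
  have hinj : Function.Injective fun z : ι → ℕ =>
      Fintype.linearCombination ℝ v fun i => z i / (m + 1 : ℝ) := by
    intro z w h
    funext i
    have := congrFun (hv.linearIndependent.fintypeLinearCombination_injective h) i
    exact_mod_cast (div_left_inj' hm).1 this
  rw [hv.latticePoints_intrinsicInterior, hinj.encard_image, encard_setOf_pos_sum_le]

theorem encard_latticePoints_biUnion_intrinsicInterior {L : AddSubgroup V} {S : Finset (Finset V)}
    (hS : ∀ A ∈ S, IsUnimodular L ((↑) : A → V))
    (hdisj : (S : Set (Finset V)).PairwiseDisjoint fun A =>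
      intrinsicInterior ℝ (convexHull ℝ (insert (0 : V) ↑A))) (m : ℕ) :
    (latticePoints L (m + 1)
        (⋃ A ∈ S, intrinsicInterior ℝ (convexHull ℝ (insert (0 : V) ↑A)))).encard =
      ((∑ A ∈ S, m.choose A.card : ℕ) : ℕ∞) := by
  rw [encard_latticePoints_biUnion L _ S hdisj, Nat.cast_sum]
  refine Finset.sum_congr rfl fun A hA => ?_
  simpa using (hS A hA).encard_latticePoints_intrinsicInterior m

theorem stmt7_general (L : AddSubgroup V) (S S' : Finset (Finset V))
    (hS : ∀ A ∈ S, IsUnimodular L ((↑) : A → V))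
    (hS' : ∀ A ∈ S', IsUnimodular L ((↑) : A → V))
    (hcov : ⋃ A ∈ S, intrinsicInterior ℝ (convexHull ℝ (insert (0 : V) ↑A)) =
      ⋃ A ∈ S', intrinsicInterior ℝ (convexHull ℝ (insert (0 : V) ↑A)))
    (hdisj : (S : Set (Finset V)).PairwiseDisjoint fun A =>
      intrinsicInterior ℝ (convexHull ℝ (insert (0 : V) ↑A)))
    (hdisj' : (S' : Set (Finset V)).PairwiseDisjoint fun A =>
      intrinsicInterior ℝ (convexHull ℝ (insert (0 : V) ↑A)))
    (i : ℕ) :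
    (S.filter fun A => A.card = i).card = (S'.filter fun A => A.card = i).card := by
  refine card_filter_eq_of_sum_choose_eq (fun m => ?_) i
  have h := encard_latticePoints_biUnion_intrinsicInterior hS hdisj m
  rw [hcov, encard_latticePoints_biUnion_intrinsicInterior hS' hdisj' m] at h
  exact_mod_cast h.symm

end Lattice

section Roots

/-- The lattice `ℤⁿ⁺¹` inside `ℝⁿ⁺¹`. -/
def integerLattice (n : ℕ) : AddSubgroup (Vtype n) :=
  AddSubgroup.pi Set.univ fun _ => (Int.castAddHom ℝ).range

variable {n : ℕ}

theorem mem_integerLattice {x : Vtype n} : x ∈ integerLattice n ↔ ∀ k, ∃ z : ℤ, (z : ℝ) = x k := by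
  simp only [integerLattice, AddSubgroup.mem_pi, Set.mem_univ, true_imp_iff,
    AddMonoidHom.mem_range, Int.coe_castAddHom]

theorem ev_mem_integerLattice (p q : Fin (n + 1)) : ev p q ∈ integerLattice n :=
  mem_integerLattice.2 fun k =>
    ⟨(Pi.single p 1 - Pi.single q 1 : Fin (n + 1) → ℤ) k, by simp [ev, Pi.single_apply]⟩

theorem sum_ev (K : Finset (Fin (n + 1))) (p q : Fin (n + 1)) :
    ∑ k ∈ K, ev p q k = (if p ∈ K then 1 else 0) - if q ∈ K then 1 else 0 := by
  simp [ev, Finset.sum_sub_distrib, Pi.single_apply]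

-- The roots are the edges of a forest, and `K` is the component of an endpoint of the edge `a` once
-- that edge is deleted.
theorem exists_cut_of_linearIndependent {ι : Type*} [DecidableEq ι] {v : ι → Vtype n}
    (hv : LinearIndependent ℝ v) (hroot : ∀ a, ∃ p q, v a = ev p q) (a : ι) :
    ∃ K : Finset (Fin (n + 1)), ∀ b, ∑ k ∈ K, v b k = if b = a then 1 else 0 := by
  classical
  obtain ⟨i, j, hij⟩ := hroot a
  let W := Submodule.span ℝ (v '' {a}ᶜ)
  let K : Finset (Fin (n + 1)) := {k | ev i k ∈ W}
  have hK (k : Fin (n + 1)) : k ∈ K ↔ ev i k ∈ W := by simp [K]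
  refine ⟨K, fun b => ?_⟩
  split_ifs with hb
  · have hi : i ∈ K := by simp [hK, ev]
    have hj : j ∉ K := by
      rw [hK, ← hij]
      exact hv.notMem_span_image (by simp)
    simp [hb, hij, sum_ev, hi, hj]
  · obtain ⟨p, q, hpq⟩ := hroot b
    have hW : ev p q ∈ W := hpq ▸ Submodule.subset_span ⟨b, hb, rfl⟩
    have hcross : p ∈ K ↔ q ∈ K := by
      have : ev i q = ev i p + ev p q := by simp [ev]
      rw [hK, hK, this, W.add_mem_iff_left hW]
    simp [hpq, sum_ev, hcross]

theorem isUnimodular_of_forall_eq_ev {ι : Type*} [Fintype ι] {v : ι → Vtype n}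
    (hv : LinearIndependent ℝ v) (hroot : ∀ a, ∃ p q, v a = ev p q) :
    IsUnimodular (integerLattice n) v where
  linearIndependent := hv
  linearCombination_mem_iff c := by
    classical
    rw [Fintype.linearCombination_apply]
    constructor
    · intro hc
      choose x hx using mem_integerLattice.1 hc
      choose K hK using exists_cut_of_linearIndependent hv hroot
      refine ⟨fun a => ∑ k ∈ K a, x k, funext fun a => ?_⟩
      calc c a = ∑ b, c b * ∑ k ∈ K a, v b k := by simp [hK]
        _ = ∑ k ∈ K a, (∑ b, c b • v b) k := by
          simp only [Finset.mul_sum, Finset.sum_apply, Pi.smul_apply, smul_eq_mul]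
          exact Finset.sum_comm
        _ = (∑ k ∈ K a, x k : ℤ) := by simp only [Int.cast_sum, hx]
    · rintro ⟨z, rfl⟩
      refine sum_mem fun a _ => ?_
      obtain ⟨p, q, hpq⟩ := hroot a
      rw [hpq, Int.cast_smul_eq_zsmul]
      exact zsmul_mem (ev_mem_integerLattice p q) (z a)

theorem isUnimodular_of_subset_PhiPlus {A : Finset (Vtype n)} (hA : ↑A ⊆ PhiPlus n)
    (hli : LinearIndependent ℝ ((↑) : A → Vtype n)) :
    IsUnimodular (integerLattice n) ((↑) : A → Vtype n) :=
  isUnimodular_of_forall_eq_ev hli fun a =>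
    let ⟨p, q, _, h⟩ := hA a.2
    ⟨p, q, h⟩

end Roots

/- STATEMENT 7 -/
theorem stmt7 {n : ℕ} (hn : 1 ≤ n) (E : EdgeSet n) (hE : IsGraph E)
    (S S' : Finset (Finset (Vtype n)))
    (hS : ∀ A ∈ S, ↑A ⊆ PhiPlus n ∧
      LinearIndependent ℝ (fun x : (A : Set (Vtype n)) => x.1))
    (hS' : ∀ A ∈ S', ↑A ⊆ PhiPlus n ∧
      LinearIndependent ℝ (fun x : (A : Set (Vtype n)) => x.1))
    (hcov : intrinsicInterior ℝ (RootPoly E) =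
      ⋃ A ∈ S, intrinsicInterior ℝ (convexHull ℝ (insert (0 : Vtype n) ↑A)))
    (hcov' : intrinsicInterior ℝ (RootPoly E) =
      ⋃ A ∈ S', intrinsicInterior ℝ (convexHull ℝ (insert (0 : Vtype n) ↑A)))
    (hdisj : (S : Set (Finset (Vtype n))).Pairwise fun A B =>
      Disjoint (intrinsicInterior ℝ (convexHull ℝ (insert (0 : Vtype n) ↑A)))
        (intrinsicInterior ℝ (convexHull ℝ (insert (0 : Vtype n) ↑B))))
    (hdisj' : (S' : Set (Finset (Vtype n))).Pairwise fun A B =>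
      Disjoint (intrinsicInterior ℝ (convexHull ℝ (insert (0 : Vtype n) ↑A)))
        (intrinsicInterior ℝ (convexHull ℝ (insert (0 : Vtype n) ↑B))))
    (i : ℕ) :
    (S.filter fun A => A.card = i).card = (S'.filter fun A => A.card = i).card :=
  stmt7_general (integerLattice n) S S'
    (fun A hA => isUnimodular_of_subset_PhiPlus (hS A hA).1 (hS A hA).2)
    (fun A hA => isUnimodular_of_subset_PhiPlus (hS' A hA).1 (hS' A hA).2)
    (hcov.symm.trans hcov') hdisj hdisj' i

end RPaper
end

section
/- Let F be a forest on the vertex set [n+1]. For every k ≥ 0, all S-reduction trees with root labeled F have the same number of leaves whose label is a graph with exactly k edges; i.e., this number depends only on F and k, not on the choice of S-reduction tree. -/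
open scoped BigOperators

namespace RPaper

/-- Finite ternary trees with nodes labeled by graphs on `[n+1]`. -/
inductive SRTree (n : ℕ) : Type
  | leaf : EdgeSet n → SRTree n
  | node : EdgeSet n → SRTree n → SRTree n → SRTree n → SRTree n

namespace SRTree

def root {n : ℕ} : SRTree n → EdgeSet n
  | leaf E => E
  | node E _ _ _ => E

/-- An S-reduction tree: every internal node's children come from a reduction of its
label, and every leaf is labeled by an alternating graph. -/
def Valid {n : ℕ} : SRTree n → Prop
  | leaf E => Alternating E
  | node E t1 t2 t3 =>
      (∃ i j k : Fin (n+1), i < j ∧ j < k ∧ (i, j) ∈ E ∧ (j, k) ∈ E ∧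
        t1.root = red1 E i j k ∧ t2.root = red2 E i j k ∧ t3.root = red3 E i j k) ∧
      t1.Valid ∧ t2.Valid ∧ t3.Valid

/-- Number of leaves labeled by a graph with exactly `k` edges. -/
def leafCount {n : ℕ} (k : ℕ) : SRTree n → ℕ
  | leaf E => if E.card = k then 1 else 0
  | node _ t1 t2 t3 => leafCount k t1 + leafCount k t2 + leafCount k t3

end SRTree

/-!
Direct every edge `(i, j)`, `i < j`, from `i` to `j`, and count the natural-number flows of height
`m` that are positive exactly on the edges of a graph, the height being the total amount produced at
the sources. Rerouting flow between the path `i → j → k` and the arc `(i, k)` does not change the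
divergence, hence not the height. For a reduction at `(i, j)`, `(j, k)`, shifting the smaller of the
two flows on the path to `(i, k)` sorts the flows on `G₀` into those on `G₁`, `G₂` and `G₃`,
according to whether the flow on `(i, j)` is larger than, smaller than or equal to that on `(j, k)`.
This is a bijection as long as `(i, k)` is not already an edge. That holds for forests and, more
generally, for graphs with at most one directed path between any two vertices (multitrees), a class
that is preserved by reductions.

In an alternating graph every vertex is a source or a sink, so the height is the total flow and the
flows of height `m` on a graph with `k` edges are the compositions of `m` into `k` parts. Hence the
numbers of leaves with `k` edges solve a triangular linear system with nonzero diagonal whose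
right-hand side, the number of flows of height `m` on the root, does not depend on the tree.
-/

section Multitree

variable {n : ℕ} {E E' : EdgeSet n} {i j k : Fin (n + 1)}

/-- `Reaches E a b`: there is a (possibly trivial) path from `a` to `b` that runs along the edges
`(i, j)` of `E` from `i` to `j`. -/
abbrev Reaches (E : EdgeSet n) : Fin (n + 1) → Fin (n + 1) → Prop :=
  Relation.ReflTransGen fun x y => (x, y) ∈ E

/-- Multitrees: directing every edge `(i, j)`, `i < j`, from `i` to `j`, there is at most one
directed path between any two vertices. This is encoded locally: directed paths that leave a vertex
along different edges never meet again. -/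
structure IsMultitree (E : EdgeSet n) : Prop where
  isGraph : IsGraph E
  eq_of_reaches ⦃a b c d : Fin (n + 1)⦄ : (a, b) ∈ E → (a, c) ∈ E →
    Reaches E b d → Reaches E c d → b = c

theorem IsGraph.le_of_reaches (hE : IsGraph E) {a b : Fin (n + 1)} (h : Reaches E a b) :
    a ≤ b := by
  induction h with
  | refl => exact le_rfl
  | tail _ hbc ih => exact ih.trans (hE _ hbc).le

theorem toSG_adj_of_mem (hE : IsGraph E) {a b : Fin (n + 1)} (h : (a, b) ∈ E) :
    (toSG E).Adj a b :=
  (SimpleGraph.fromRel_adj _ _ _).2 ⟨(hE _ h).ne, Or.inl h⟩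

theorem IsGraph.reachable_deleteEdges_of_lt (hE : IsGraph E) {a b x d : Fin (n + 1)}
    (hax : a < x) (h : Reaches E x d) :
    ((toSG E).deleteEdges {s(a, b)}).Reachable x d := by
  induction h with
  | refl => rfl
  | @tail y z hxy hyz ih =>
    have hay : a < y := hax.trans_le (hE.le_of_reaches hxy)
    have haz : a < z := hay.trans (hE _ hyz)
    refine ih.trans (SimpleGraph.Adj.reachable ?_)
    rw [SimpleGraph.deleteEdges_adj]
    exact ⟨toSG_adj_of_mem hE hyz, by grind⟩

theorem IsForest.isMultitree (hE : IsForest E) : IsMultitree E := by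
  obtain ⟨hG, hacyclic⟩ := hE
  refine ⟨hG, fun a b c d hab hac hbd hcd => by_contra fun hbc => ?_⟩
  have hbridge : (toSG E).IsBridge s(a, b) :=
    SimpleGraph.isAcyclic_iff_forall_isBridge.1 hacyclic (toSG_adj_of_mem hG hab)
  have hac' : ((toSG E).deleteEdges {s(a, b)}).Adj a c := by
    rw [SimpleGraph.deleteEdges_adj]
    exact ⟨toSG_adj_of_mem hG hac, fun h => hbc (Sym2.congr_right.1 h).symm⟩
  have hcd' := hG.reachable_deleteEdges_of_lt (b := b) (hG _ hac) hcd
  have hbd' := hG.reachable_deleteEdges_of_lt (b := b) (hG _ hab) hbd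
  exact SimpleGraph.isBridge_iff.1 hbridge ((hac'.reachable.trans hcd').trans hbd'.symm)

theorem IsMultitree.notMem (hE : IsMultitree E) (hij : (i, j) ∈ E) (hjk : (j, k) ∈ E) :
    (i, k) ∉ E := fun hik =>
  (hE.isGraph _ hjk).ne (hE.eq_of_reaches hij hik (.single hjk) .refl)

theorem IsMultitree.of_subset_insert (hE : IsMultitree E) (hij : (i, j) ∈ E) (hjk : (j, k) ∈ E)
    (hsub : E' ⊆ insert (i, k) E) (hnot : (i, j) ∈ E' → (j, k) ∉ E') : IsMultitree E' := by
  have hE'cases : ∀ {x y}, (x, y) ∈ E' → (x = i ∧ y = k) ∨ (x, y) ∈ E := fun h => by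
    simpa using hsub h
  have hreach : ∀ {x y}, Reaches E' x y → Reaches E x y := fun h =>
    Relation.reflTransGen_closed (r := fun x y => (x, y) ∈ E') (fun a b hab => by
      obtain ⟨rfl, rfl⟩ | hab := hE'cases hab
      · exact .tail (.single hij) hjk
      · exact .single hab) _ _ h
  -- In `E`, a path from `i` along the new edge starts with `j`, so `c = j` and `(i, j)` survives;
  -- then `(j, k)` does not, and the path from `c` cannot reach `d` without passing through `k`.
  have hnew : ∀ {c d}, (i, c) ∈ E → (i, c) ∈ E' →
      Reaches E' c d → ¬ Reaches E' k d := by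
    intro c d hic hic' hcd hkd
    obtain rfl : j = c := hE.eq_of_reaches hij hic (.head hjk (hreach hkd)) (hreach hcd)
    obtain rfl | ⟨x, hjx, hxd⟩ := hcd.cases_head
    · exact (hE.isGraph _ hjk).not_ge (hE.isGraph.le_of_reaches (hreach hkd))
    obtain ⟨rfl, -⟩ | hjxE := hE'cases hjx
    · exact (hE.isGraph _ hij).false
    · obtain rfl := hE.eq_of_reaches hjxE hjk (hreach hxd) (hreach hkd)
      exact hnot hic' hjx
  refine ⟨fun e he => ?_, fun a b c d hab hac hbd hcd => ?_⟩
  · obtain ⟨h₁, h₂⟩ | he := hE'cases he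
    · rw [h₁, h₂]
      exact (hE.isGraph _ hij).trans (hE.isGraph _ hjk)
    · exact hE.isGraph e he
  · rcases hE'cases hab with ⟨rfl, rfl⟩ | habE <;> rcases hE'cases hac with ⟨ha, rfl⟩ | hacE
    · rfl
    · exact (hnew hacE hac hcd hbd).elim
    · subst ha
      exact (hnew habE hab hbd hcd).elim
    · exact hE.eq_of_reaches habE hacE (hreach hbd) (hreach hcd)

theorem IsMultitree.red1 (hE : IsMultitree E) (hij : (i, j) ∈ E) (hjk : (j, k) ∈ E) :
    IsMultitree (red1 E i j k) :=
  hE.of_subset_insert hij hjk (by grind [RPaper.red1])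
    (by have := hE.isGraph _ hij; grind [RPaper.red1])

theorem IsMultitree.red2 (hE : IsMultitree E) (hij : (i, j) ∈ E) (hjk : (j, k) ∈ E) :
    IsMultitree (red2 E i j k) :=
  hE.of_subset_insert hij hjk (by grind [RPaper.red2])
    (by have := hE.isGraph _ hjk; grind [RPaper.red2])

theorem IsMultitree.red3 (hE : IsMultitree E) (hij : (i, j) ∈ E) (hjk : (j, k) ∈ E) :
    IsMultitree (red3 E i j k) :=
  hE.of_subset_insert hij hjk (by grind [RPaper.red3])
    (by have := hE.isGraph _ hij; grind [RPaper.red3])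

end Multitree

section Flow

variable {V : Type*} [Fintype V]

/-- The divergence of a flow `c` on the arcs `V × V`: outflow minus inflow at `v`. -/
def netOutflow (c : V × V →₀ ℕ) (v : V) : ℤ := ∑ w, (c (v, w) : ℤ) - ∑ w, (c (w, v) : ℤ)

/-- The height of a flow: the total amount produced at its sources. -/
def height (c : V × V →₀ ℕ) : ℕ := ∑ v, (netOutflow c v).toNat

/-- The flows of height `m` that are positive exactly on the arcs in `E`. -/
def positiveFlows (E : Finset (V × V)) (m : ℕ) : Set (V × V →₀ ℕ) :=
  {c | c.support = E ∧ height c = m}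

theorem netOutflow_add (c c' : V × V →₀ ℕ) :
    netOutflow (c + c') = netOutflow c + netOutflow c' := by
  funext v
  simp only [netOutflow, Finsupp.add_apply, Nat.cast_add, Finset.sum_add_distrib, Pi.add_apply]
  ring

theorem netOutflow_single [DecidableEq V] (a b : V) (t : ℕ) :
    netOutflow (Finsupp.single (a, b) t) = Pi.single a (t : ℤ) - Pi.single b (t : ℤ) := by
  funext v
  by_cases ha : a = v <;> by_cases hb : b = v <;>
    simp [netOutflow, Finsupp.single_apply, ha, hb, eq_comm]

theorem height_eq_sum {c : V × V →₀ ℕ} (hc : ∀ u v w, c (u, v) = 0 ∨ c (v, w) = 0) :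
    height c = ∑ e ∈ c.support, c e := by
  have htoNat (v : V) : (netOutflow c v).toNat = ∑ w, c (v, w) := by
    have hv : ∑ u, c (u, v) = 0 ∨ ∑ w, c (v, w) = 0 := by
      simp only [Finset.sum_eq_zero_iff, Finset.mem_univ, true_imp_iff]
      grind
    simp only [netOutflow]
    norm_cast
    lia
  calc height c = ∑ v, ∑ w, c (v, w) := Finset.sum_congr rfl fun v _ => htoNat v
    _ = ∑ e, c e := (Fintype.sum_prod_type c).symm
    _ = ∑ e ∈ c.support, c e := (Finset.sum_subset (Finset.subset_univ _) (by simp)).symm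

theorem disjoint_positiveFlows {E E' : Finset (V × V)} (h : E ≠ E') (m : ℕ) :
    Disjoint (positiveFlows E m) (positiveFlows E' m) :=
  Set.disjoint_left.2 fun _ hc hc' => h (hc.1.symm.trans hc'.1)

end Flow

section Reroute

variable {V : Type*} {i j k : V}

/-- Reroutes all flow on the arc `(i, k)` through `j`. -/
noncomputable def expandFlow (i j k : V) (c : V × V →₀ ℕ) : V × V →₀ ℕ :=
  c.erase (i, k) + Finsupp.single (i, j) (c (i, k)) + Finsupp.single (j, k) (c (i, k))

/-- Reroutes as much flow as possible from the path `i → j → k` to the arc `(i, k)`, using up the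
smaller of the two flows on this path. -/
noncomputable def contractFlow (i j k : V) (c : V × V →₀ ℕ) : V × V →₀ ℕ :=
  let t := min (c (i, j)) (c (j, k))
  c - Finsupp.single (i, j) t - Finsupp.single (j, k) t + Finsupp.single (i, k) t

theorem height_expandFlow [Fintype V] (i j k : V) (c : V × V →₀ ℕ) :
    height (expandFlow i j k c) = height c := by
  classical
  have hadd : expandFlow i j k c + Finsupp.single (i, k) (c (i, k)) =
      c + (Finsupp.single (i, j) (c (i, k)) + Finsupp.single (j, k) (c (i, k))) := by
    calc expandFlow i j k c + Finsupp.single (i, k) (c (i, k))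
      _ = c.erase (i, k) + Finsupp.single (i, k) (c (i, k)) +
          (Finsupp.single (i, j) (c (i, k)) + Finsupp.single (j, k) (c (i, k))) := by
        rw [expandFlow]
        abel
      _ = _ := by rw [Finsupp.erase_add_single]
  have hnet : netOutflow (expandFlow i j k c) = netOutflow c := by
    have h := congrArg netOutflow hadd
    simp only [netOutflow_add, netOutflow_single, sub_add_sub_cancel] at h
    exact add_right_cancel h
  simp only [height, hnet]

theorem expandFlow_contractFlow {c : V × V →₀ ℕ} (hij : i ≠ j) (hjk : j ≠ k) (hc : c (i, k) = 0) :
    expandFlow i j k (contractFlow i j k c) = c := by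
  classical
  ext e
  simp only [expandFlow, contractFlow, Finsupp.add_apply, Finsupp.tsub_apply, Finsupp.erase_apply,
    Finsupp.single_apply]
  grind

theorem contractFlow_expandFlow {c : V × V →₀ ℕ} (hij : i ≠ j) (hjk : j ≠ k)
    (hc : c (i, j) = 0 ∨ c (j, k) = 0) : contractFlow i j k (expandFlow i j k c) = c := by
  classical
  ext e
  simp only [expandFlow, contractFlow, Finsupp.add_apply, Finsupp.tsub_apply, Finsupp.erase_apply,
    Finsupp.single_apply]
  grind

theorem contractFlow_eq_zero_or (hij : i ≠ j) (hjk : j ≠ k) (c : V × V →₀ ℕ) :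
    contractFlow i j k c (i, j) = 0 ∨ contractFlow i j k c (j, k) = 0 := by
  classical
  simp only [contractFlow, Finsupp.add_apply, Finsupp.tsub_apply, Finsupp.single_apply]
  grind

end Reroute

section Reduction

variable {n : ℕ} {E : EdgeSet n} {i j k : Fin (n + 1)} {c : Edge n →₀ ℕ}

theorem eq_zero_or_of_support_eq_red (hij : i ≠ j) (hjk : j ≠ k)
    (h : c.support = red1 E i j k ∨ c.support = red2 E i j k ∨ c.support = red3 E i j k) :
    c (i, j) = 0 ∨ c (j, k) = 0 := by
  rw [← Finsupp.notMem_support_iff, ← Finsupp.notMem_support_iff]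
  grind [red1, red2, red3]

theorem support_expandFlow_eq_iff (hij : (i, j) ∈ E) (hjk : (j, k) ∈ E) (hik : (i, k) ∉ E)
    (hc : c (i, j) = 0 ∨ c (j, k) = 0) :
    (expandFlow i j k c).support = E ↔
      c.support = red1 E i j k ∨ c.support = red2 E i j k ∨ c.support = red3 E i j k := by
  simp only [Finset.ext_iff, Finsupp.mem_support_iff, expandFlow, Finsupp.add_apply,
    Finsupp.erase_apply, Finsupp.single_apply, red1, red2, red3, Finset.mem_insert,
    Finset.mem_erase]
  constructor
  · intro h
    have hpos : c (i, k) ≠ 0 := by grind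
    by_cases hjk0 : c (j, k) = 0
    · by_cases hij0 : c (i, j) = 0
      · right; right; grind
      · left; grind
    · right; left; grind
  · rintro (h | h | h) <;> grind

theorem bijOn_expandFlow_positiveFlows (hij : (i, j) ∈ E) (hjk : (j, k) ∈ E) (hik : (i, k) ∉ E)
    (m : ℕ) :
    Set.BijOn (expandFlow i j k)
      (positiveFlows (red1 E i j k) m ∪ (positiveFlows (red2 E i j k) m ∪
        positiveFlows (red3 E i j k) m)) (positiveFlows E m) := by
  have hne : i ≠ j := fun h => hik (h ▸ hjk)
  have hne' : j ≠ k := fun h => hik (h ▸ hij)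
  have hzero : ∀ c ∈ positiveFlows (red1 E i j k) m ∪ (positiveFlows (red2 E i j k) m ∪
      positiveFlows (red3 E i j k) m), c (i, j) = 0 ∨ c (j, k) = 0 := fun c hc =>
    eq_zero_or_of_support_eq_red hne hne' (hc.imp And.left (Or.imp And.left And.left))
  have hmem : ∀ {c : Edge n →₀ ℕ}, c (i, j) = 0 ∨ c (j, k) = 0 →
      (expandFlow i j k c ∈ positiveFlows E m ↔ c ∈ positiveFlows (red1 E i j k) m ∪
        (positiveFlows (red2 E i j k) m ∪ positiveFlows (red3 E i j k) m)) := fun hc => by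
    simp only [positiveFlows, Set.mem_union, Set.mem_ofPred_eq, height_expandFlow,
      support_expandFlow_eq_iff hij hjk hik hc, or_and_right]
  refine ⟨fun c hc => (hmem (hzero c hc)).2 hc, ?_, fun c hc => ?_⟩
  · exact Set.LeftInvOn.injOn fun c hc => contractFlow_expandFlow hne hne' (hzero c hc)
  · have hexpand : expandFlow i j k (contractFlow i j k c) = c :=
      expandFlow_contractFlow hne hne' (Finsupp.notMem_support_iff.1 (hc.1 ▸ hik))
    exact ⟨_, (hmem (contractFlow_eq_zero_or hne hne' c)).1 (hexpand.symm ▸ hc), hexpand⟩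

theorem encard_positiveFlows_eq_add (hij : (i, j) ∈ E) (hjk : (j, k) ∈ E) (hik : (i, k) ∉ E)
    (m : ℕ) :
    (positiveFlows E m).encard = (positiveFlows (red1 E i j k) m).encard +
      ((positiveFlows (red2 E i j k) m).encard + (positiveFlows (red3 E i j k) m).encard) := by
  have h₁₂ : red1 E i j k ≠ red2 E i j k := fun h => by
    have := Finset.ext_iff.1 h (i, j)
    grind [red1, red2]
  have h₁₃ : red1 E i j k ≠ red3 E i j k := fun h => by
    have := Finset.ext_iff.1 h (i, j)
    grind [red1, red3]
  have h₂₃ : red2 E i j k ≠ red3 E i j k := fun h => by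
    have := Finset.ext_iff.1 h (j, k)
    grind [red2, red3]
  have hbij := bijOn_expandFlow_positiveFlows hij hjk hik m
  rw [← hbij.image_eq, hbij.injOn.encard_image,
    Set.encard_union_eq (Set.disjoint_union_right.2
      ⟨disjoint_positiveFlows h₁₂ m, disjoint_positiveFlows h₁₃ m⟩),
    Set.encard_union_eq (disjoint_positiveFlows h₂₃ m)]

end Reduction

section Alternating

theorem encard_support_eq_sum_eq_add_card {ι : Type*} (E : Finset ι) (m : ℕ) :
    {c : ι →₀ ℕ | c.support = E ∧ ∑ e ∈ E, c e = m + E.card}.encard = E.card.multichoose m := by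
  classical
  let one : ι →₀ ℕ := Finsupp.indicator E fun _ _ => 1
  have hone : ∀ e, one e = if e ∈ E then 1 else 0 := fun e => by simp [one]
  have hsum : ∀ c : ι →₀ ℕ, ∑ e ∈ E, (c + one) e = ∑ e ∈ E, c e + E.card := fun c => by
    simp [Finset.sum_add_distrib, hone]
  have himage : {c : ι →₀ ℕ | c.support = E ∧ ∑ e ∈ E, c e = m + E.card} =
      (· + one) '' (E.finsuppAntidiag m : Set (ι →₀ ℕ)) := by
    ext c
    simp only [Set.mem_ofPred_eq, Set.mem_image, Finset.mem_coe, Finset.mem_finsuppAntidiag]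
    constructor
    · rintro ⟨hc, hm⟩
      have hsub : c - one + one = c := tsub_add_cancel_of_le fun e => by
        have := Finsupp.mem_support_iff (f := c) (a := e)
        grind
      refine ⟨c - one, ⟨?_, Finsupp.support_tsub.trans hc.le⟩, hsub⟩
      rw [← hsub, hsum] at hm
      exact add_right_cancel hm
    · rintro ⟨d, ⟨hd, hsupp⟩, rfl⟩
      refine ⟨?_, by rw [hsum, hd]⟩
      ext e
      have := @hsupp e
      simp only [Finsupp.mem_support_iff, Finsupp.add_apply, hone] at this ⊢
      grind
  rw [himage, (add_left_injective one).encard_image, Set.encard_coe_eq_coe_finsetCard,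
    Finset.card_finsuppAntidiag_nat_eq_multichoose]

theorem encard_support_eq_sum_eq {ι : Type*} (E : Finset ι) (m : ℕ) :
    {c : ι →₀ ℕ | c.support = E ∧ ∑ e ∈ E, c e = m}.encard =
      ((if E.card ≤ m then E.card.multichoose (m - E.card) else 0 : ℕ) : ℕ∞) := by
  split_ifs with hm
  · rw [← encard_support_eq_sum_eq_add_card, Nat.sub_add_cancel hm]
  · rw [Nat.cast_zero, Set.encard_eq_zero, Set.eq_empty_iff_forall_notMem]
    rintro c ⟨rfl, rfl⟩
    refine hm ?_
    rw [Finset.card_eq_sum_ones]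
    exact Finset.sum_le_sum fun e he => Nat.one_le_iff_ne_zero.2 (Finsupp.mem_support_iff.1 he)

theorem height_eq_sum_of_alternating {n : ℕ} {E : EdgeSet n} (hG : IsGraph E)
    (hE : Alternating E) {c : Edge n →₀ ℕ} (hc : c.support = E) : height c = ∑ e ∈ E, c e := by
  subst hc
  refine height_eq_sum fun u v w => ?_
  by_contra! h
  have huv : (u, v) ∈ c.support := Finsupp.mem_support_iff.2 h.1
  have hvw : (v, w) ∈ c.support := Finsupp.mem_support_iff.2 h.2
  exact hE ⟨u, v, w, hG _ huv, hG _ hvw, huv, hvw⟩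

theorem encard_positiveFlows_of_alternating {n : ℕ} {E : EdgeSet n} (hG : IsGraph E)
    (hE : Alternating E) (m : ℕ) : (positiveFlows E m).encard =
      ((if E.card ≤ m then E.card.multichoose (m - E.card) else 0 : ℕ) : ℕ∞) := by
  rw [← encard_support_eq_sum_eq]
  congr 1
  ext c
  exact and_congr_right fun hc => by rw [height_eq_sum_of_alternating hG hE hc]

end Alternating

theorem SRTree.Valid.encard_positiveFlows_root {n : ℕ} {R : SRTree n} (hR : R.Valid)
    (hroot : IsMultitree R.root) (m : ℕ) : (positiveFlows R.root m).encard =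
      ((∑ k ∈ Finset.range (m + 1), R.leafCount k * k.multichoose (m - k) : ℕ) : ℕ∞) := by
  induction R with
  | leaf E =>
    simp only [SRTree.root] at hroot ⊢
    rw [encard_positiveFlows_of_alternating hroot.isGraph hR]
    simp [SRTree.leafCount]
  | node E t₁ t₂ t₃ ih₁ ih₂ ih₃ =>
    obtain ⟨⟨i, j, k, -, -, hij, hjk, h₁, h₂, h₃⟩, hv₁, hv₂, hv₃⟩ := hR
    simp only [SRTree.root] at hroot ⊢
    rw [encard_positiveFlows_eq_add hij hjk (hroot.notMem hij hjk), ← h₁, ← h₂, ← h₃,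
      ih₁ hv₁ (h₁ ▸ hroot.red1 hij hjk), ih₂ hv₂ (h₂ ▸ hroot.red2 hij hjk),
      ih₃ hv₃ (h₃ ▸ hroot.red3 hij hjk)]
    norm_cast
    simp only [SRTree.leafCount, add_mul, Finset.sum_add_distrib, add_assoc]

theorem eq_of_sum_range_succ_mul_eq {R : Type*} [Semiring R] [IsCancelAdd R]
    [IsRightCancelMulZero R] {w : ℕ → ℕ → R} (hw : ∀ m, w m m ≠ 0) {a b : ℕ → R}
    (h : ∀ m, ∑ k ∈ Finset.range (m + 1), a k * w m k = ∑ k ∈ Finset.range (m + 1), b k * w m k) :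
    a = b := by
  funext m
  induction m using Nat.strong_induction_on with
  | _ m ih =>
    have hlower : ∑ k ∈ Finset.range m, a k * w m k = ∑ k ∈ Finset.range m, b k * w m k :=
      Finset.sum_congr rfl fun k hk => by rw [ih k (Finset.mem_range.1 hk)]
    have hm := h m
    rw [Finset.sum_range_succ, Finset.sum_range_succ, hlower] at hm
    exact mul_right_cancel₀ (hw m) (add_left_cancel hm)

theorem stmt8_general {n : ℕ} (F : EdgeSet n) (hF : IsMultitree F)
    (R R' : SRTree n) (hR : R.Valid) (hR' : R'.Valid)
    (hr : R.root = F) (hr' : R'.root = F) (k : ℕ) :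
    R.leafCount k = R'.leafCount k := by
  have heq : (R.leafCount ·) = (R'.leafCount ·) :=
    eq_of_sum_range_succ_mul_eq (w := fun m k => k.multichoose (m - k)) (by simp) fun m => by
      have hcount := hR.encard_positiveFlows_root (hr ▸ hF) m
      rw [hr, ← hr', hR'.encard_positiveFlows_root (hr' ▸ hF) m] at hcount
      exact_mod_cast hcount.symm
  exact congrFun heq k

/- STATEMENT 8 -/
theorem stmt8 {n : ℕ} (hn : 1 ≤ n) (F : EdgeSet n) (hF : IsForest F)
    (R R' : SRTree n) (hR : R.Valid) (hR' : R'.Valid)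
    (hr : R.root = F) (hr' : R'.root = F) (k : ℕ) :
    R.leafCount k = R'.leafCount k :=
  stmt8_general F hF.isMultitree R R' hR hR' hr hr' k

end RPaper
end
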